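/- arXiv:2504.05723 — 3 statements merged into one kernel-verified Lean document; each statement's English description precedes it below -/
import Mathlib

section
/- Let W be an hpd n×n complex matrix, let A, H_R be n×n complex matrices and H_L an invertible n×n complex matrix, and set H := H_R H_L. Then FOV^W(H_L A H_R) = FOV^{H_Lᴴ W H_L}(A H), i.e., the W-field of values of H_L A H_R equals the (H_Lᴴ W H_L)-field of values of A H_R H_L. -/
open Polynomial Matrix
open scoped ComplexOrder

/-- The `W`-field of values of a matrix `B`:
`FOV^W(B) = { ⟨Bz, z⟩_W / ⟨z, z⟩_W : z ≠ 0 }` where `⟨u, v⟩_W = vᴴ W u`. -/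
def fovW {n : ℕ} (W B : Matrix (Fin n) (Fin n) ℂ) : Set ℂ :=
  {c : ℂ | ∃ z : Fin n → ℂ, z ≠ 0 ∧
    c = (star z ⬝ᵥ (W *ᵥ (B *ᵥ z))) / (star z ⬝ᵥ (W *ᵥ z))}

/-- For hpd `W` and invertible `HL`, with `H := HR * HL`,
`FOV^W(HL A HR) = FOV^{HLᴴ W HL}(A H)`. -/
theorem fov_weighted_eq {n : ℕ}
    (W A HR HL : Matrix (Fin n) (Fin n) ℂ)
    (hW : W.PosDef) (hHL : IsUnit HL.det) :
    fovW W (HL * A * HR) = fovW (HLᴴ * W * HL) (A * (HR * HL)) := by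
  have key : ∀ y v : Fin n → ℂ,
      star y ⬝ᵥ ((HLᴴ * W * HL) *ᵥ v) = star (HL *ᵥ y) ⬝ᵥ (W *ᵥ (HL *ᵥ v)) := by
    intro y v
    rw [star_mulVec, ← dotProduct_mulVec, mulVec_mulVec, mulVec_mulVec, Matrix.mul_assoc]
  ext c
  constructor
  · rintro ⟨z, hz, rfl⟩
    have hy : HL *ᵥ (HL⁻¹ *ᵥ z) = z := by
      rw [mulVec_mulVec, Matrix.mul_nonsing_inv _ hHL, one_mulVec]
    refine ⟨HL⁻¹ *ᵥ z, ?_, ?_⟩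
    · intro h
      rw [h, mulVec_zero] at hy
      exact hz hy.symm
    · rw [key, key]
      simp only [← mulVec_mulVec, hy]
  · rintro ⟨y, hy, rfl⟩
    refine ⟨HL *ᵥ y, ?_, ?_⟩
    · intro h
      apply hy
      have h2 : HL⁻¹ *ᵥ (HL *ᵥ y) = y := by
        rw [mulVec_mulVec, Matrix.nonsing_inv_mul _ hHL, one_mulVec]
      rw [← h2, h, mulVec_zero]
    · rw [key, key]
      simp only [← mulVec_mulVec]
end

section
/- Let A be an n×n complex matrix, H a Hermitian n×n complex matrix, and Z ∈ ℂ^{n×m} such that, setting Y := HAZ, the matrix YᴴAZ is invertible. Then the deflation projector P_D := I − AZ(YᴴAZ)⁻¹Yᴴ is self-adjoint with respect to the H-inner product: H P_D = P_Dᴴ H. -/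
open Matrix

/-- For Hermitian `H` and `Y := H A Z` with `Yᴴ A Z` invertible, the
deflation projector `P_D = I − A Z (Yᴴ A Z)⁻¹ Yᴴ` is self-adjoint with respect to the
`H`-inner product: `H P_D = P_Dᴴ H`. -/
theorem deflation_projector_H_selfadjoint {n m : ℕ}
    (A H : Matrix (Fin n) (Fin n) ℂ) (Z : Matrix (Fin n) (Fin m) ℂ)
    (hH : H.IsHermitian)
    (Y : Matrix (Fin n) (Fin m) ℂ) (hY : Y = H * A * Z)
    (hinv : IsUnit (Yᴴ * A * Z).det)
    (PD : Matrix (Fin n) (Fin n) ℂ)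
    (hPD : PD = 1 - A * Z * (Yᴴ * A * Z)⁻¹ * Yᴴ) :
    H * PD = PDᴴ * H := by
  subst hY hPD
  have h : Hᴴ = H := hH
  simp [Matrix.conjTranspose_nonsing_inv, Matrix.mul_sub, Matrix.sub_mul, h, Matrix.mul_assoc]
end

section
/- Let A be a positive definite n×n complex matrix, H an hpd n×n complex matrix, and Z ∈ ℂ^{n×m} of full column rank (m ≤ n). Set Y := HAZ. Then YᴴAZ = ZᴴAᴴHAZ is hpd (in particular invertible), and YᴴH⁻¹Z = ZᴴAᴴZ is invertible. -/
open Matrix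
open scoped ComplexOrder

theorem aux_pd_zero {n : ℕ} (A : Matrix (Fin n) (Fin n) ℂ)
    (hA : Matrix.PosDef ((1 / 2 : ℂ) • (A + Aᴴ))) (x : Fin n → ℂ)
    (h : star x ⬝ᵥ (A *ᵥ x) = 0) : x = 0 := by
  by_contra hx
  have h1 := hA.dotProduct_mulVec_pos hx
  have h2 : star x ⬝ᵥ (Aᴴ *ᵥ x) = 0 := by
    have h3 := congrArg star h
    rw [← star_dotProduct_star, star_star, star_mulVec, star_zero,
      ← dotProduct_mulVec] at h3
    exact h3
  rw [smul_mulVec, add_mulVec, dotProduct_smul, dotProduct_add, h, h2] at h1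
  simp at h1

/-- If `A` is positive definite (its Hermitian part is hpd), `H` is hpd,
`Z` has full column rank, and `Y := H A Z`, then `Yᴴ A Z = Zᴴ Aᴴ H A Z` is hpd (in
particular invertible) and `Yᴴ H⁻¹ Z = Zᴴ Aᴴ Z` is invertible. -/
theorem deflation_nonbreakdown_conditions {n m : ℕ}
    (A H : Matrix (Fin n) (Fin n) ℂ) (Z : Matrix (Fin n) (Fin m) ℂ)
    (hA : Matrix.PosDef ((1 / 2 : ℂ) • (A + Aᴴ))) (hH : H.PosDef)
    (hZ : ∀ v : Fin m → ℂ, Z *ᵥ v = 0 → v = 0) (hmn : m ≤ n)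
    (Y : Matrix (Fin n) (Fin m) ℂ) (hY : Y = H * A * Z) :
    Yᴴ * A * Z = Zᴴ * Aᴴ * H * A * Z ∧
    Matrix.PosDef (Yᴴ * A * Z) ∧
    Yᴴ * H⁻¹ * Z = Zᴴ * Aᴴ * Z ∧
    IsUnit (Zᴴ * Aᴴ * Z).det := by
  have hHH : Hᴴ = H := hH.isHermitian
  have e1 : Yᴴ * A * Z = Zᴴ * Aᴴ * H * A * Z := by
    rw [hY]
    simp only [conjTranspose_mul, hHH, Matrix.mul_assoc]
  have hdet : IsUnit H.det := (Matrix.isUnit_iff_isUnit_det H).1 hH.isUnit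
  refine ⟨e1, ?_, ?_, ?_⟩
  · have e2 : Yᴴ * A * Z = (A * Z)ᴴ * H * (A * Z) := by
      rw [e1]
      simp only [conjTranspose_mul, Matrix.mul_assoc]
    rw [e2]
    apply hH.conjTranspose_mul_mul_same
    intro v w hvw
    have hvw' : (A * Z) *ᵥ (v - w) = 0 := by
      rw [mulVec_sub]
      exact sub_eq_zero.2 hvw
    rw [← mulVec_mulVec] at hvw'
    refine sub_eq_zero.1 (hZ _ (aux_pd_zero A hA _ ?_))
    rw [hvw', dotProduct_zero]
  · rw [hY]
    simp only [conjTranspose_mul, hHH]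
    rw [← Matrix.mul_assoc, Matrix.mul_nonsing_inv_cancel_right _ _ hdet]
  · rw [isUnit_iff_ne_zero]
    intro h0
    obtain ⟨v, hv, hv0⟩ := Matrix.exists_mulVec_eq_zero_iff.2 h0
    apply hv
    apply hZ
    apply aux_pd_zero Aᴴ (by rwa [conjTranspose_conjTranspose, add_comm])
    have h1 : star v ⬝ᵥ ((Zᴴ * Aᴴ * Z) *ᵥ v) = 0 := by rw [hv0, dotProduct_zero]
    rw [star_mulVec, ← dotProduct_mulVec, mulVec_mulVec, mulVec_mulVec]
    exact h1
end
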